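/- arXiv:1409.2536 — 2 statements merged into one kernel-verified Lean document; each statement's English description precedes it below -/
import Mathlib

section
/- (Strong converse, constant composition) Let W be a classical–quantum channel from a finite alphabet X with |X| = a into the density operators on ℂ^d, and λ ∈ (0,1). Every (n,λ)-code (f,D) all of whose codewords f(m) have the same type P satisfies |M| ≤ (4/(1−λ))·exp₂(n·I(P;W) + 2K·d·√a·δ·√n), where δ = √(32ad)/(1−λ) and K = 2 log₂(e)/e. -/
open Matrix BigOperators Finset
open scoped Classical ComplexOrder

noncomputable section

/-- Square complex matrices of size `d` (operators on `ℂ^d`). -/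
abbrev Mat (d : ℕ) := Matrix (Fin d) (Fin d) ℂ

/-- Operators on the `n`-fold tensor power `(ℂ^d)^{⊗n}`, indexed by `Fin n → Fin d`. -/
abbrev MatPow (d n : ℕ) := Matrix (Fin n → Fin d) (Fin n → Fin d) ℂ

/-- Tensor product `A 0 ⊗ A 1 ⊗ ⋯ ⊗ A (n-1)` of a family of `d × d` matrices. -/
def tensorPow {d n : ℕ} (A : Fin n → Mat d) : MatPow d n :=
  Matrix.of fun j k => ∏ i, A i (j i) (k i)

/-- Exponential to base 2. -/
def exp2 (t : ℝ) : ℝ := (2 : ℝ) ^ t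

/-- `P` is a probability distribution on the finite set `X`. -/
def IsProbDist {X : Type*} [Fintype X] (P : X → ℝ) : Prop :=
  (∀ x, 0 ≤ P x) ∧ ∑ x, P x = 1

/-- `ρ` is a density operator (a state): positive semidefinite with trace one. -/
def IsState {ι : Type*} [Fintype ι] [DecidableEq ι] (ρ : Matrix ι ι ℂ) : Prop :=
  ρ.PosSemidef ∧ ρ.trace = 1

/-- `N(x|x^n)`: number of occurrences of the letter `x` in the sequence `xs`. -/
def countIn {X : Type*} {n : ℕ} (x : X) (xs : Fin n → X) : ℕ :=
  (Finset.univ.filter fun i => xs i = x).card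

/-- The variance-typical set `T^n_{P,δ}`. -/
def typicalSet {X : Type*} [Fintype X] (n : ℕ) (P : X → ℝ) (δ : ℝ) :
    Finset (Fin n → X) :=
  Finset.univ.filter fun xs => ∀ x : X,
    |(countIn x xs : ℝ) - n * P x| ≤ δ * Real.sqrt n * Real.sqrt (P x * (1 - P x))

/-- Product (i.i.d.) probability `P^{⊗n}(A)` of a set `A` of sequences. -/
def prodProb {X : Type*} [Fintype X] {n : ℕ} (P : X → ℝ) (A : Finset (Fin n → X)) : ℝ :=
  ∑ xs ∈ A, ∏ i, P (xs i)

/-- Shannon entropy to base 2. -/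
def shannonEntropy {X : Type*} [Fintype X] (P : X → ℝ) : ℝ :=
  -∑ x, P x * Real.logb 2 (P x)

/-- von Neumann entropy to base 2, `H(ρ) = -Tr(ρ log₂ ρ)`, via the eigenvalues. -/
def vnEntropy {d : ℕ} (ρ : Mat d) : ℝ :=
  if h : ρ.IsHermitian then -∑ i, h.eigenvalues i * Real.logb 2 (h.eigenvalues i) else 0

/-- The constant `K = 2 log₂(e) / e`. -/
def Kconst : ℝ := 2 * Real.logb 2 (Real.exp 1) / Real.exp 1

/-- A diagonalization `ρ = Σ_j R j • π j` into one-dimensional mutually orthogonal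
eigenprojectors, with eigenvalue list `R` a probability distribution. -/
def IsDiagonalization {d : ℕ} (ρ : Mat d) (R : Fin d → ℝ) (π : Fin d → Mat d) : Prop :=
  (∀ j, (π j).PosSemidef) ∧ (∀ j, π j * π j = π j) ∧ (∀ j, (π j).trace = 1) ∧
    (∀ j k, j ≠ k → π j * π k = 0) ∧ (∑ j, π j = 1) ∧
    ρ = ∑ j, (R j : ℂ) • π j ∧ IsProbDist R

/-- The variance-typical projector `Π^n_{ρ,δ}` of a state with fixed diagonalization
`(R, π)`. -/
def typicalProj {d : ℕ} (n : ℕ) (R : Fin d → ℝ) (π : Fin d → Mat d) (δ : ℝ) : MatPow d n :=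
  ∑ js ∈ typicalSet n R δ, tensorPow fun i => π (js i)

/-- `B` is an `η`-shadow of the state `σ`: `0 ≤ B ≤ 1` and `Tr(σB) ≥ η`. -/
def IsShadow {ι : Type*} [Fintype ι] [DecidableEq ι] (σ B : Matrix ι ι ℂ) (η : ℝ) : Prop :=
  B.PosSemidef ∧ ((1 : Matrix ι ι ℂ) - B).PosSemidef ∧ η ≤ (Matrix.trace (σ * B)).re

/-- Average state `PW = Σ_x P(x) W_x` of a cq-channel under input distribution `P`. -/
def avgState {X : Type*} [Fintype X] {d : ℕ} (P : X → ℝ) (W : X → Mat d) : Mat d :=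
  ∑ x, (P x : ℂ) • W x

/-- Conditional von Neumann entropy `H(W|P) = Σ_x P(x) H(W_x)`. -/
def condEntropy {X : Type*} [Fintype X] {d : ℕ} (P : X → ℝ) (W : X → Mat d) : ℝ :=
  ∑ x, P x * vnEntropy (W x)

/-- Mutual information `I(P;W) = H(PW) − H(W|P)`. -/
def mutualInfo {X : Type*} [Fintype X] {d : ℕ} (P : X → ℝ) (W : X → Mat d) : ℝ :=
  vnEntropy (avgState P W) - condEntropy P W

/-- Capacity `C(W) = max_P I(P;W)`. -/
def capacity {X : Type*} [Fintype X] {d : ℕ} (W : X → Mat d) : ℝ :=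
  sSup {c | ∃ P : X → ℝ, IsProbDist P ∧ c = mutualInfo P W}

/-- `(f, D)` (with message set `M` inside the outcome index set `M'`) is an
`(n,λ)`-code for the cq-channel `W`: the `D m` are positive semidefinite, sum to the
identity, and each message is decoded correctly with probability at least `1 - λ`. -/
def IsCode {X : Type*} [Fintype X] {d n : ℕ} (W : X → Mat d) (lam : ℝ)
    {M' : Type*} [Fintype M'] (M : Finset M') (f : M' → Fin n → X)
    (D : M' → MatPow d n) : Prop :=
  (∀ m, (D m).PosSemidef) ∧ (∑ m, D m = 1) ∧
    ∀ m ∈ M, 1 - lam ≤ (Matrix.trace (tensorPow (fun i => W (f m i)) * D m)).re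

/-- `N(n,λ)`: maximal size of an `(n,λ)`-code for `W`. -/
def maxCodeSize {X : Type*} [Fintype X] (d : ℕ) (W : X → Mat d) (n : ℕ) (lam : ℝ) : ℕ :=
  sSup {k | ∃ (M' : Type) (_ : Fintype M') (M : Finset M') (f : M' → Fin n → X)
    (D : M' → MatPow d n), IsCode W lam M f D ∧ M.card = k}

/-- Trace norm `‖A‖₁ = Tr|A|`: the sum of the singular values. -/
def traceNorm {ι : Type*} [Fintype ι] [DecidableEq ι] (A : Matrix ι ι ℂ) : ℝ :=
  ∑ i, Real.sqrt ((Matrix.posSemidef_conjTranspose_mul_self A).1.eigenvalues i)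

/-- Trace distance `D(ρ,σ) = ½‖ρ−σ‖₁`. -/
def traceDist {ι : Type*} [Fintype ι] [DecidableEq ι] (ρ σ : Matrix ι ι ℂ) : ℝ :=
  traceNorm (ρ - σ) / 2

/-- (Pure-state) fidelity `F(ρ,σ) = Tr(ρσ)`. -/
def fidelity {ι : Type*} [Fintype ι] [DecidableEq ι] (ρ σ : Matrix ι ι ℂ) : ℝ :=
  (Matrix.trace (ρ * σ)).re

/-- A pure state: the rank-one orthogonal projector `|ψ⟩⟨ψ|` onto the span of a
unit vector `ψ`. -/
def IsPureState {ι : Type*} [Fintype ι] (ρ : Matrix ι ι ℂ) : Prop :=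
  ∃ ψ : ι → ℂ, (∑ i, star (ψ i) * ψ i) = 1 ∧ ρ = Matrix.vecMulVec ψ (star ψ)

/-- The set of eigenvalue-index sequences `js` that are variance-typical, with
constant `δ`, for the distribution `q x` on each block `I_x = {i : xs i = x}`. -/
def condTypicalSet {X : Type*} [Fintype X] {n d : ℕ} (xs : Fin n → X)
    (q : X → Fin d → ℝ) (δ : ℝ) : Finset (Fin n → Fin d) :=
  Finset.univ.filter fun js => ∀ (x : X) (k : Fin d),
    |((Finset.univ.filter fun i => xs i = x ∧ js i = k).card : ℝ) - (countIn x xs : ℝ) * q x k|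
      ≤ δ * Real.sqrt (countIn x xs) * Real.sqrt (q x k * (1 - q x k))

/-- Conditional variance-typical projector `Π^n_{W,δ}(x^n) = ⊗_{x∈X} Π^{I_x}_{W_x,δ}`,
with respect to fixed diagonalizations `W_x = Σ_j (q x j) • (π x j)`. -/
def condTypicalProj {X : Type*} [Fintype X] {d : ℕ} {n : ℕ} (xs : Fin n → X)
    (q : X → Fin d → ℝ) (π : X → Fin d → Mat d) (δ : ℝ) : MatPow d n :=
  ∑ js ∈ condTypicalSet xs q δ, tensorPow fun i => π (xs i) (js i)

/-! With `η = 1 - λ` and `ρ = PW`, let `T` project onto the span of the product eigenvectors of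
`ρ^{⊗n}` with eigenvalue at least `exp₂ (-n H(ρ) - t)`, so that `Tr T ≤ exp₂ (n H(ρ) + t)`. For a
codeword of type `P`, Chebyshev's inequality for the logarithm of a product of eigenvalues, applied
twice, shows that up to an error `n d K² / t²` its state is supported in `T` and dominated by
`exp₂ (-n H(W|P) + t)` times the identity. Conjugation by the reflection `2T - 1` gives the pinching
inequality `D ≤ 2 T D T + 2 (1 - T)` for `0 ≤ D ≤ 1`; hence every decoding operator occupies a trace
of order `η exp₂ (n H(W|P) - t)` within `T`. As these operators sum to the identity, there are at
most about `η⁻¹ exp₂ (n I(P;W) + 2 t)` messages. The choice `t = K d √a δ √n` makes the error at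
most `η² / 32`.
-/

section Development

open Unitary
open scoped MatrixOrder

/-! ### Trace inequalities -/

section TraceInequalities

variable {ι : Type*} [Fintype ι]

lemma re_trace_mul_nonneg {A B : Matrix ι ι ℂ} (hA : 0 ≤ A) (hB : 0 ≤ B) :
    0 ≤ (A * B).trace.re := by
  obtain ⟨C, rfl⟩ := CStarAlgebra.nonneg_iff_eq_star_mul_self.mp hA
  rw [Matrix.mul_assoc, trace_mul_comm]
  exact (Complex.le_def.1
    (nonneg_iff_posSemidef.1 (star_right_conjugate_nonneg hB C)).trace_nonneg).1

lemma re_trace_mul_le_re_trace_mul {A B C : Matrix ι ι ℂ} (hA : 0 ≤ A) (hBC : B ≤ C) :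
    (A * B).trace.re ≤ (A * C).trace.re := by
  have h := re_trace_mul_nonneg hA (sub_nonneg.2 hBC)
  rwa [Matrix.mul_sub, trace_sub, Complex.sub_re, sub_nonneg] at h

variable [DecidableEq ι]

lemma le_two_smul_conj_add_two_smul_compl {T D : Matrix ι ι ℂ} (hT : IsStarProjection T)
    (hD₀ : 0 ≤ D) (hD₁ : D ≤ 1) : D ≤ 2 • (T * D * T) + 2 • (1 - T) := by
  have hTT : T * T = T := hT.isIdempotentElem
  have hreflect : 0 ≤ (T - (1 - T)) * D * (T - (1 - T)) :=
    (hT.isSelfAdjoint.sub hT.one_sub.isSelfAdjoint).conjugate_nonneg hD₀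
  have hcompl : 0 ≤ (1 - T) * (1 - D) * (1 - T) :=
    hT.one_sub.isSelfAdjoint.conjugate_nonneg (sub_nonneg.2 hD₁)
  have hdecomp : 2 • (T * D * T) + 2 • (1 - T) - D =
      (T - (1 - T)) * D * (T - (1 - T)) + 2 • ((1 - T) * (1 - D) * (1 - T)) := by
    simp only [mul_sub, sub_mul, mul_one, one_mul, hTT]
    abel
  exact sub_nonneg.1 (hdecomp ▸ add_nonneg hreflect (nsmul_nonneg hcompl 2))

lemma re_trace_mul_le_of_isStarProjection {ρ T D : Matrix ι ι ℂ} (hρ : 0 ≤ ρ)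
    (hT : IsStarProjection T) (hD₀ : 0 ≤ D) (hD₁ : D ≤ 1) :
    (ρ * D).trace.re ≤ 2 * (ρ * (T * D * T)).trace.re + 2 * (ρ * (1 - T)).trace.re := by
  have h := re_trace_mul_le_re_trace_mul hρ (le_two_smul_conj_add_two_smul_compl hT hD₀ hD₁)
  rw [Matrix.mul_add, trace_add, Matrix.mul_smul, Matrix.mul_smul, trace_smul, trace_smul] at h
  simpa using h

lemma sum_re_trace_conj_le {κ : Type*} [Fintype κ] {T : Matrix ι ι ℂ} {D : κ → Matrix ι ι ℂ}
    (hT : IsStarProjection T) (hD₀ : ∀ m, 0 ≤ D m) (hD : ∑ m, D m = 1) (M : Finset κ) :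
    ∑ m ∈ M, (T * D m * T).trace.re ≤ T.trace.re :=
  calc ∑ m ∈ M, (T * D m * T).trace.re
      ≤ ∑ m, (T * D m * T).trace.re :=
        sum_le_univ_sum_of_nonneg fun m => (Complex.le_def.1 (nonneg_iff_posSemidef.1
          (hT.isSelfAdjoint.conjugate_nonneg (hD₀ m))).trace_nonneg).1
    _ = T.trace.re := by
        rw [← Complex.re_sum, ← trace_sum, ← Matrix.sum_mul, ← Matrix.mul_sum, hD,
          Matrix.mul_one, hT.isIdempotentElem]

lemma card_mul_le_mul_trace {κ : Type*} [Fintype κ] {M : Finset κ} {ρ D : κ → Matrix ι ι ℂ}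
    {T : Matrix ι ι ℂ} {η ε ε' c : ℝ} (hT : IsStarProjection T) (hD₀ : ∀ m, 0 ≤ D m)
    (hD : ∑ m, D m = 1) (hc : 0 ≤ c) (hρ : ∀ m ∈ M, 0 ≤ ρ m)
    (hdecode : ∀ m ∈ M, η ≤ (ρ m * D m).trace.re)
    (hsupport : ∀ m ∈ M, (ρ m * (1 - T)).trace.re ≤ ε)
    (hshadow : ∀ m ∈ M, ∀ B, 0 ≤ B → B ≤ 1 → (ρ m * B).trace.re ≤ ε' + c * B.trace.re) :
    M.card * (η - 2 * (ε + ε')) ≤ 2 * c * T.trace.re := by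
  have hmessage : ∀ m ∈ M, η - 2 * (ε + ε') ≤ 2 * c * (T * D m * T).trace.re := by
    intro m hm
    have hDm : D m ≤ 1 := hD ▸ single_le_sum (fun k _ => hD₀ k) (mem_univ m)
    have hpinch := re_trace_mul_le_of_isStarProjection (hρ m hm) hT (hD₀ m) hDm
    have hcompress : T * D m * T ≤ 1 :=
      calc T * D m * T ≤ T * 1 * T := hT.isSelfAdjoint.conjugate_le_conjugate hDm
        _ = T := by rw [Matrix.mul_one, hT.isIdempotentElem]
        _ ≤ 1 := hT.le_one
    linarith [hdecode m hm, hsupport m hm,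
      hshadow m hm _ (hT.isSelfAdjoint.conjugate_nonneg (hD₀ m)) hcompress]
  calc M.card * (η - 2 * (ε + ε'))
      = ∑ m ∈ M, (η - 2 * (ε + ε')) := by rw [sum_const, nsmul_eq_mul]
    _ ≤ ∑ m ∈ M, 2 * c * (T * D m * T).trace.re := sum_le_sum hmessage
    _ = 2 * c * ∑ m ∈ M, (T * D m * T).trace.re := (mul_sum ..).symm
    _ ≤ 2 * c * T.trace.re := by gcongr; exact sum_re_trace_conj_le hT hD₀ hD M

end TraceInequalities

/-! ### Measurement in an orthonormal basis -/

section BasisMeasurement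

variable {ι : Type*} [Fintype ι] [DecidableEq ι]

/-- The Born rule: the probability of outcome `j` when `ρ` is measured in the orthonormal basis
of the columns of `U`, that is, the `j`-th diagonal entry of `U* ρ U` (which is real for
Hermitian `ρ`). -/
def bornProb (U : unitaryGroup ι ℂ) (ρ : Matrix ι ι ℂ) (j : ι) : ℝ :=
  (conjStarAlgAut ℂ _ (star U) ρ j j).re

/-- The orthogonal projection onto the span of the columns of `U` with index in `S`. -/
def basisProj (U : unitaryGroup ι ℂ) (S : Finset ι) : Matrix ι ι ℂ :=
  conjStarAlgAut ℂ _ U (diagonal fun j => if j ∈ S then 1 else 0)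

variable {U : unitaryGroup ι ℂ}

lemma trace_conjStarAlgAut_mul (A B : Matrix ι ι ℂ) :
    (conjStarAlgAut ℂ _ U A * B).trace = (A * conjStarAlgAut ℂ _ (star U) B).trace := by
  rw [conjStarAlgAut_apply, conjStarAlgAut_star_apply, Matrix.mul_assoc, Matrix.mul_assoc,
    trace_mul_comm]
  simp only [Matrix.mul_assoc]

lemma bornProb_nonneg {ρ : Matrix ι ι ℂ} (hρ : 0 ≤ ρ) (j : ι) : 0 ≤ bornProb U ρ j :=
  (Complex.le_def.1 (nonneg_iff_posSemidef.1
    (map_nonneg (conjStarAlgAut ℂ _ (star U)) hρ)).diag_nonneg).1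

lemma bornProb_le_one {B : Matrix ι ι ℂ} (hB : B ≤ 1) (j : ι) : bornProb U B j ≤ 1 := by
  simpa only [bornProb, map_sub, map_one, Matrix.sub_apply, one_apply_eq, Complex.sub_re,
    Complex.one_re, sub_nonneg] using bornProb_nonneg (U := U) (sub_nonneg.2 hB) j

lemma sum_bornProb (ρ : Matrix ι ι ℂ) : ∑ j, bornProb U ρ j = ρ.trace.re := by
  rw [← trace_map (conjStarAlgAut ℂ _ (star U)) ρ, trace, Complex.re_sum]
  rfl

lemma IsState.isProbDist_bornProb {ρ : Matrix ι ι ℂ} (hρ : IsState ρ) :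
    IsProbDist (bornProb U ρ) :=
  ⟨bornProb_nonneg hρ.1.nonneg, by rw [sum_bornProb, hρ.2, Complex.one_re]⟩

lemma bornProb_eigenvectorUnitary {A : Matrix ι ι ℂ} (hA : A.IsHermitian) :
    bornProb hA.eigenvectorUnitary A = hA.eigenvalues := by
  ext j
  rw [bornProb, hA.conjStarAlgAut_star_eigenvectorUnitary, diagonal_apply_eq]
  rfl

lemma re_trace_conjStarAlgAut_diagonal_mul (q : ι → ℝ) (B : Matrix ι ι ℂ) :
    (conjStarAlgAut ℂ _ U (diagonal fun j => (q j : ℂ)) * B).trace.re =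
      ∑ j, q j * bornProb U B j := by
  rw [trace_conjStarAlgAut_mul, trace, Complex.re_sum]
  exact sum_congr rfl fun j _ => by
    rw [diag_apply, diagonal_mul, Complex.re_ofReal_mul, bornProb]

lemma re_trace_mul_le_tail_add {ρ B : Matrix ι ι ℂ} {q : ι → ℝ} {c : ℝ}
    (hρ : ρ = conjStarAlgAut ℂ _ U (diagonal fun j => (q j : ℂ))) (hq : ∀ j, 0 ≤ q j)
    (hc : 0 ≤ c) (hB₀ : 0 ≤ B) (hB₁ : B ≤ 1) :
    (ρ * B).trace.re ≤ (∑ j with c < q j, q j) + c * B.trace.re := by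
  rw [hρ, re_trace_conjStarAlgAut_diagonal_mul, ← sum_bornProb (U := U), sum_filter, mul_sum,
    ← sum_add_distrib]
  refine sum_le_sum fun j _ => ?_
  have hb₀ := bornProb_nonneg (U := U) hB₀ j
  split_ifs with hj
  · exact (mul_le_of_le_one_right (hq j) (bornProb_le_one hB₁ j)).trans
      (le_add_of_nonneg_right (mul_nonneg hc hb₀))
  · rw [zero_add]
    exact mul_le_mul_of_nonneg_right (not_lt.1 hj) hb₀

lemma isStarProjection_basisProj (S : Finset ι) : IsStarProjection (basisProj U S) := by
  refine IsStarProjection.map ⟨?_, ?_⟩ (conjStarAlgAut ℂ _ U)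
  · simp [IsIdempotentElem]
  · rw [IsSelfAdjoint, star_eq_conjTranspose, diagonal_conjTranspose]
    congr! with j
    simp [apply_ite]

lemma trace_basisProj (S : Finset ι) : (basisProj U S).trace = #S := by
  simp [basisProj, -conjStarAlgAut_apply]

lemma one_sub_basisProj (S : Finset ι) : 1 - basisProj U S = basisProj U Sᶜ := by
  rw [basisProj, basisProj, ← map_one (conjStarAlgAut ℂ _ U), ← map_sub, ← diagonal_one,
    diagonal_sub]
  refine congrArg (conjStarAlgAut ℂ _ U) (congrArg diagonal (funext fun j => ?_))
  by_cases hj : j ∈ S <;> simp [hj]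

lemma re_trace_mul_basisProj (ρ : Matrix ι ι ℂ) (S : Finset ι) :
    (ρ * basisProj U S).trace.re = ∑ j ∈ S, bornProb U ρ j := by
  have hindicator : (fun j => if j ∈ S then (1 : ℂ) else 0) =
      fun j => ((if j ∈ S then 1 else 0 : ℝ) : ℂ) := funext fun j => by split_ifs <;> simp
  rw [trace_mul_comm, basisProj, hindicator, re_trace_conjStarAlgAut_diagonal_mul]
  simp only [ite_mul, one_mul, zero_mul, sum_ite_mem, univ_inter]

end BasisMeasurement

/-! ### Tensor products -/

section Tensor

variable {d n : ℕ}

lemma tensorPow_mul (A B : Fin n → Mat d) :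
    tensorPow A * tensorPow B = tensorPow fun i => A i * B i := by
  ext j k
  simp only [tensorPow, Matrix.mul_apply, of_apply, Fintype.prod_sum, prod_mul_distrib]

lemma star_tensorPow (A : Fin n → Mat d) : star (tensorPow A) = tensorPow fun i => star (A i) := by
  ext j k
  simp [tensorPow, star_apply]

lemma tensorPow_diagonal (q : Fin n → Fin d → ℂ) :
    (tensorPow fun i => diagonal (q i)) = diagonal fun js => ∏ i, q i (js i) := by
  ext j k
  obtain rfl | h := eq_or_ne j k
  · simp [tensorPow]
  · obtain ⟨i, hi⟩ := Function.ne_iff.1 h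
    rw [diagonal_apply_ne _ h]
    exact prod_eq_zero (mem_univ i) (diagonal_apply_ne _ hi)

lemma tensorPow_one : (tensorPow fun _ : Fin n => (1 : Mat d)) = 1 := by
  simpa using tensorPow_diagonal (d := d) (n := n) fun _ _ => 1

lemma tensorPow_nonneg {A : Fin n → Mat d} (hA : ∀ i, 0 ≤ A i) : 0 ≤ tensorPow A := by
  choose B hB using fun i => CStarAlgebra.nonneg_iff_eq_star_mul_self.mp (hA i)
  rw [funext hB, ← tensorPow_mul, ← star_tensorPow]
  exact star_mul_self_nonneg _

/-- The tensor product of a family of unitary matrices, as a unitary matrix. -/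
def tensorUnitary (U : Fin n → unitaryGroup (Fin d) ℂ) : unitaryGroup (Fin n → Fin d) ℂ :=
  ⟨tensorPow fun i => U i, mem_unitaryGroup_iff.2 <| by
    simp only [star_tensorPow, tensorPow_mul, mem_unitaryGroup_iff.1 (U _).2, tensorPow_one]⟩

lemma star_tensorUnitary (U : Fin n → unitaryGroup (Fin d) ℂ) :
    star (tensorUnitary U) = tensorUnitary fun i => star (U i) :=
  Subtype.ext (star_tensorPow _)

lemma conjStarAlgAut_tensorUnitary (U : Fin n → unitaryGroup (Fin d) ℂ) (A : Fin n → Mat d) :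
    conjStarAlgAut ℂ _ (tensorUnitary U) (tensorPow A) =
      tensorPow fun i => conjStarAlgAut ℂ _ (U i) (A i) := by
  simp only [conjStarAlgAut_apply, tensorUnitary, star_tensorPow, tensorPow_mul]

lemma tensorPow_eq_conjStarAlgAut_diagonal {A : Fin n → Mat d}
    (hA : ∀ i, (A i).IsHermitian) :
    tensorPow A = conjStarAlgAut ℂ _ (tensorUnitary fun i => (hA i).eigenvectorUnitary)
      (diagonal fun js => ((∏ i, (hA i).eigenvalues (js i) : ℝ) : ℂ)) := by
  simp only [Complex.ofReal_prod]
  rw [← tensorPow_diagonal fun i k => ((hA i).eigenvalues k : ℂ), conjStarAlgAut_tensorUnitary]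
  exact congrArg tensorPow (funext fun i => (hA i).spectral_theorem)

lemma bornProb_tensorUnitary (U : Fin n → unitaryGroup (Fin d) ℂ) {A : Fin n → Mat d}
    (hA : ∀ i, (A i).IsHermitian) (js : Fin n → Fin d) :
    bornProb (tensorUnitary U) (tensorPow A) js = ∏ i, bornProb (U i) (A i) (js i) := by
  have hentry (i : Fin n) : (bornProb (U i) (A i) (js i) : ℂ) =
      conjStarAlgAut ℂ _ (star (U i)) (A i) (js i) (js i) :=
    IsHermitian.coe_re_apply_self
      (IsSelfAdjoint.map (hA i) (conjStarAlgAut ℂ _ (star (U i)))) (js i)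
  rw [bornProb, star_tensorUnitary, conjStarAlgAut_tensorUnitary, tensorPow, of_apply,
    ← Complex.ofReal_re (∏ i, _), Complex.ofReal_prod]
  simp only [hentry]

end Tensor

/-! ### Products of probability distributions -/

section Probability

lemma exp2_pos (t : ℝ) : 0 < exp2 t := Real.rpow_pos_of_pos two_pos t

lemma exp2_add (s t : ℝ) : exp2 (s + t) = exp2 s * exp2 t := Real.rpow_add two_pos s t

lemma exp2_neg (t : ℝ) : exp2 (-t) = (exp2 t)⁻¹ := Real.rpow_neg zero_le_two t

lemma Kconst_pos : 0 < Kconst :=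
  div_pos (mul_pos two_pos (Real.logb_pos one_lt_two (Real.one_lt_exp_iff.2 one_pos)))
    (Real.exp_pos 1)

/-- Equality holds at `r = e⁻²`: this is where the constant `K` comes from. -/
lemma mul_logb_sq_le_Kconst_sq {r : ℝ} (h₀ : 0 ≤ r) (h₁ : r ≤ 1) :
    r * Real.logb 2 r ^ 2 ≤ Kconst ^ 2 := by
  obtain rfl | hr := h₀.eq_or_lt
  · simpa using sq_nonneg Kconst
  obtain ⟨u, rfl⟩ : ∃ u, r = Real.exp (-u) ^ 2 :=
    ⟨-(Real.log r / 2), by rw [neg_neg, ← Real.exp_nat_mul, Nat.cast_ofNat,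
      mul_div_cancel₀ _ two_ne_zero, Real.exp_log hr]⟩
  have hu : 0 ≤ u := by
    rwa [sq_le_one_iff₀ (Real.exp_nonneg _), Real.exp_le_one_iff, neg_nonpos] at h₁
  calc Real.exp (-u) ^ 2 * Real.logb 2 (Real.exp (-u) ^ 2) ^ 2
      = (2 * (u * Real.exp (-u)) / Real.log 2) ^ 2 := by
        rw [Real.logb, Real.log_pow, Real.log_exp]
        push_cast
        ring
    _ ≤ (2 * Real.exp (-1) / Real.log 2) ^ 2 := by
        gcongr
        exact Real.mul_exp_neg_le_exp_neg_one u
    _ = Kconst ^ 2 := by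
        rw [Kconst, Real.logb, Real.log_exp, Real.exp_neg]
        ring

namespace IsProbDist

variable {κ : Type*} [Fintype κ]

lemma le_one {p : κ → ℝ} (hp : IsProbDist p) (k : κ) : p k ≤ 1 :=
  hp.2 ▸ single_le_sum (fun k _ => hp.1 k) (mem_univ k)

lemma sum_mul_logb_sq_le {p : κ → ℝ} (hp : IsProbDist p) :
    ∑ k, p k * Real.logb 2 (p k) ^ 2 ≤ Fintype.card κ * Kconst ^ 2 := by
  simpa using sum_le_card_nsmul univ _ _ fun k _ =>
    mul_logb_sq_le_Kconst_sq (hp.1 k) (hp.le_one k)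

/-- The probability mass function with the weights of a probability distribution. -/
def toPMF {p : κ → ℝ} (hp : IsProbDist p) : PMF κ :=
  PMF.ofFintype (fun k => ENNReal.ofReal (p k)) <| by
    rw [← ENNReal.ofReal_sum_of_nonneg fun k _ => hp.1 k, hp.2, ENNReal.ofReal_one]

section Measure

variable [MeasurableSpace κ] [MeasurableSingletonClass κ]

lemma integral_toPMF {p : κ → ℝ} (hp : IsProbDist p) (g : κ → ℝ) :
    ∫ k, g k ∂hp.toPMF.toMeasure = ∑ k, p k * g k := by
  simp [PMF.integral_eq_sum, toPMF, hp.1]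

lemma measureReal_pi_toPMF {ι : Type*} [Fintype ι] {p : ι → κ → ℝ}
    (hp : ∀ i, IsProbDist (p i)) (S : Finset (ι → κ)) :
    (MeasureTheory.Measure.pi fun i => (hp i).toPMF.toMeasure).real S =
      ∑ js ∈ S, ∏ i, p i (js i) := by
  rw [← MeasureTheory.sum_measureReal_singleton]
  refine sum_congr rfl fun js _ => ?_
  simp [MeasureTheory.measureReal_def, toPMF, (hp _).1]

end Measure

variable {ι : Type*} [Fintype ι] [DecidableEq ι] {p : ι → κ → ℝ}

lemma prod (hp : ∀ i, IsProbDist (p i)) : IsProbDist fun js : ι → κ => ∏ i, p i (js i) :=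
  ⟨fun _ => prod_nonneg fun i _ => (hp i).1 _, by simp [← Fintype.prod_sum, (hp _).2]⟩

open MeasureTheory ProbabilityTheory in
lemma sum_prod_le_of_le_abs_sub (hp : ∀ i, IsProbDist (p i)) (g : ι → κ → ℝ) {t : ℝ}
    (ht : 0 < t) :
    ∑ js : ι → κ with t ≤ |∑ i, g i (js i) - ∑ i, ∑ k, p i k * g i k|, ∏ i, p i (js i) ≤
      (∑ i, ∑ k, p i k * g i k ^ 2) / t ^ 2 := by
  let _ : MeasurableSpace κ := ⊤
  set μ : ι → Measure κ := fun i => (hp i).toPMF.toMeasure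
  set G : (ι → κ) → ℝ := ∑ i, fun js => g i (js i)
  have hG (js : ι → κ) : G js = ∑ i, g i (js i) := sum_apply ..
  have hmean : ∫ js, G js ∂Measure.pi μ = ∑ i, ∑ k, p i k * g i k := by
    simp only [hG]
    rw [integral_finsetSum _ fun i _ => .of_finite]
    exact sum_congr rfl fun i _ =>
      (integral_comp_eval .of_discrete).trans ((hp i).integral_toPMF (g i))
  have hvar : Var[G; Measure.pi μ] ≤ ∑ i, ∑ k, p i k * g i k ^ 2 := by
    rw [variance_sum_pi fun _ => .of_discrete]
    exact sum_le_sum fun i _ =>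
      (variance_le_expectation_sq .of_discrete).trans_eq ((hp i).integral_toPMF _)
  rw [← measureReal_pi_toPMF hp]
  calc _ ≤ Var[G; Measure.pi μ] / t ^ 2 := by
        refine ENNReal.toReal_le_of_le_ofReal (div_nonneg (variance_nonneg _ _) (sq_nonneg t)) ?_
        convert meas_ge_le_variance_div_sq (μ := Measure.pi μ) (X := G) .of_discrete ht using 2
        rw [hmean, coe_filter_univ]
        simp only [hG]
    _ ≤ _ := by gcongr

/-- The weights `s i` need not be the distributions `p i` themselves, as a state is measured in the
eigenbasis of another one. -/
lemma sum_prod_le_of_prod_notMem_Icc (hp : ∀ i, IsProbDist (p i)) {s : ι → κ → ℝ}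
    (hs : ∀ i k, p i k ≠ 0 → 0 < s i k) {t : ℝ} (ht : 0 < t) :
    ∑ js : ι → κ with ∏ i, s i (js i) ∉
        Set.Icc (exp2 (∑ i, ∑ k, p i k * Real.logb 2 (s i k) - t))
          (exp2 (∑ i, ∑ k, p i k * Real.logb 2 (s i k) + t)), ∏ i, p i (js i) ≤
      (∑ i, ∑ k, p i k * Real.logb 2 (s i k) ^ 2) / t ^ 2 := by
  rw [← sum_filter_ne_zero]
  refine (sum_le_sum_of_subset_of_nonneg (fun js hjs => ?_) fun js _ _ => (prod hp).1 js).trans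
    (sum_prod_le_of_le_abs_sub hp (fun i k => Real.logb 2 (s i k)) ht)
  obtain ⟨hjs, hne⟩ := mem_filter.1 hjs
  have hpos (i : ι) : 0 < s i (js i) := hs i _ (prod_ne_zero_iff.1 hne i (mem_univ i))
  rw [mem_filter_univ] at hjs ⊢
  contrapose! hjs
  rw [← Real.logb_prod _ _ fun i _ => (hpos i).ne', abs_sub_lt_iff] at hjs
  have hprod : 0 < ∏ i, s i (js i) := prod_pos fun i _ => hpos i
  constructor
  · exact (Real.le_logb_iff_rpow_le one_lt_two hprod).1 (by linarith)
  · exact (Real.logb_le_iff_le_rpow one_lt_two hprod).1 (by linarith)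

end IsProbDist

end Probability

/-! ### Types, average states and typical projections -/

section Types

variable {X : Type*} {n : ℕ} {xs : Fin n → X} {P : X → ℝ}

/-- The sequence `xs` has type `P`: every letter `x` occurs `n * P x` times. Clearing the
denominator `n` makes sense of the empty sequence. -/
def HasType (xs : Fin n → X) (P : X → ℝ) : Prop := ∀ x, (countIn x xs : ℝ) = n * P x

lemma HasType.apply_pos (hxs : HasType xs P) (i : Fin n) : 0 < P (xs i) := by
  have hcount : 0 < countIn (xs i) xs := card_pos.2 ⟨i, mem_filter_univ _ |>.2 rfl⟩
  exact pos_of_mul_pos_right (hxs (xs i) ▸ Nat.cast_pos.2 hcount) n.cast_nonneg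

variable [Fintype X]

lemma HasType.sum_comp (hxs : HasType xs P) (φ : X → ℝ) :
    ∑ i, φ (xs i) = n * ∑ x, P x * φ x := by
  simp only [mul_sum, ← mul_assoc, ← hxs _, countIn, ← nsmul_eq_mul, ← sum_const]
  exact (sum_fiberwise' univ xs φ).symm

end Types

section States

variable {X : Type*} [Fintype X] {d : ℕ} {P : X → ℝ} {W : X → Mat d}

lemma vnEntropy_eq_shannonEntropy_eigenvalues {ρ : Mat d} (hρ : ρ.IsHermitian) :
    vnEntropy ρ = shannonEntropy hρ.eigenvalues := dif_pos hρ

lemma IsState.isProbDist_eigenvalues {ι : Type*} [Fintype ι] [DecidableEq ι] {ρ : Matrix ι ι ℂ}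
    (hρ : IsState ρ) : IsProbDist hρ.1.1.eigenvalues :=
  bornProb_eigenvectorUnitary hρ.1.1 ▸ hρ.isProbDist_bornProb

lemma IsState.nonempty {ι : Type*} [Fintype ι] [DecidableEq ι] {ρ : Matrix ι ι ℂ}
    (hρ : IsState ρ) : Nonempty ι := by
  by_contra! h
  simpa [trace] using hρ.2

lemma IsProbDist.nonempty (hP : IsProbDist P) : Nonempty X := by
  by_contra! h
  simpa using hP.2

lemma isState_avgState (hP : IsProbDist P) (hW : ∀ x, IsState (W x)) :
    IsState (avgState P W) := by
  refine ⟨posSemidef_sum _ fun x _ => (hW x).1.smul (Complex.zero_le_real.2 (hP.1 x)), ?_⟩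
  simp only [avgState, trace_sum, trace_smul, (hW _).2, smul_eq_mul, mul_one,
    ← Complex.ofReal_sum, hP.2, Complex.ofReal_one]

lemma bornProb_avgState (U : unitaryGroup (Fin d) ℂ) (k : Fin d) :
    bornProb U (avgState P W) k = ∑ x, P x * bornProb U (W x) k := by
  simp only [bornProb, avgState, map_sum, map_smul, Matrix.sum_apply, Matrix.smul_apply,
    smul_eq_mul, Complex.re_sum, Complex.re_ofReal_mul]

end States

section Typicality

variable {X : Type*} [Fintype X] {d n : ℕ} {P : X → ℝ} {W : X → Mat d} {xs : Fin n → X} {t : ℝ}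

lemma HasType.re_trace_tensorPow_mul_le (hxs : HasType xs P) (hW : ∀ x, IsState (W x))
    (ht : 0 < t) {B : MatPow d n} (hB₀ : 0 ≤ B) (hB₁ : B ≤ 1) :
    (tensorPow (fun i => W (xs i)) * B).trace.re ≤
      n * (d * Kconst ^ 2) / t ^ 2 + exp2 (-(n * condEntropy P W) + t) * B.trace.re := by
  set q : Fin n → Fin d → ℝ := fun i => (hW (xs i)).1.1.eigenvalues
  have hq (i : Fin n) : IsProbDist (q i) := (hW (xs i)).isProbDist_eigenvalues
  have hmean : ∑ i, ∑ k, q i k * Real.logb 2 (q i k) = -(n * condEntropy P W) := by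
    rw [hxs.sum_comp fun x => ∑ k, (hW x).1.1.eigenvalues k *
      Real.logb 2 ((hW x).1.1.eigenvalues k), condEntropy, ← mul_neg, ← sum_neg_distrib]
    simp only [vnEntropy_eq_shannonEntropy_eigenvalues (hW _).1.1, shannonEntropy, mul_neg, neg_neg]
  have hsq : ∑ i, ∑ k, q i k * Real.logb 2 (q i k) ^ 2 ≤ n * (d * Kconst ^ 2) := by
    simpa using sum_le_card_nsmul univ _ _ fun i _ => (hq i).sum_mul_logb_sq_le
  have htail : ∑ js : Fin n → Fin d with exp2 (-(n * condEntropy P W) + t) < ∏ i, q i (js i),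
      ∏ i, q i (js i) ≤ n * (d * Kconst ^ 2) / t ^ 2 := by
    have hatypical := IsProbDist.sum_prod_le_of_prod_notMem_Icc hq
      (fun i k hk => ((hq i).1 k).lt_of_ne' hk) ht
    rw [hmean] at hatypical
    calc _ ≤ _ := sum_le_sum_of_subset_of_nonneg
          (monotone_filter_right _ fun js _ hjs hmem => hjs.not_ge hmem.2)
          fun js _ _ => (IsProbDist.prod hq).1 js
      _ ≤ _ := hatypical
      _ ≤ _ := by gcongr
  exact (re_trace_mul_le_tail_add
    (tensorPow_eq_conjStarAlgAut_diagonal fun i => (hW (xs i)).1.1)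
    (IsProbDist.prod hq).1 (exp2_pos _).le hB₀ hB₁).trans (by gcongr)

/-- The projection onto the span of those product eigenvectors of `ρ^{⊗n}` whose eigenvalue is
at least `exp₂ (-n H(ρ) - t)`. Of the two inequalities defining an entropy-typical subspace it
keeps the one which bounds the dimension. -/
def entropyTypicalProj {ρ : Mat d} (hρ : ρ.IsHermitian) (n : ℕ) (t : ℝ) : MatPow d n :=
  basisProj (tensorUnitary fun _ => hρ.eigenvectorUnitary)
    {js | exp2 (-(n * vnEntropy ρ) - t) ≤ ∏ i, hρ.eigenvalues (js i)}

lemma IsState.re_trace_entropyTypicalProj_le {ρ : Mat d} (hρ : IsState ρ) (n : ℕ) (t : ℝ) :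
    (entropyTypicalProj hρ.1.1 n t).trace.re ≤ exp2 (n * vnEntropy ρ + t) := by
  have hprod := IsProbDist.prod fun _ : Fin n => hρ.isProbDist_eigenvalues
  rw [entropyTypicalProj, trace_basisProj, Complex.natCast_re, ← neg_neg (n * vnEntropy ρ + t),
    exp2_neg, neg_add', ← one_div, le_div_iff₀ (exp2_pos _), ← nsmul_eq_mul]
  calc _ ≤ ∑ js : Fin n → Fin d with
          exp2 (-(n * vnEntropy ρ) - t) ≤ ∏ i, hρ.1.1.eigenvalues (js i),
        ∏ i, hρ.1.1.eigenvalues (js i) :=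
        card_nsmul_le_sum _ _ _ fun js hjs => (mem_filter_univ js).1 hjs
    _ ≤ ∑ js : Fin n → Fin d, ∏ i, hρ.1.1.eigenvalues (js i) :=
        sum_le_univ_sum_of_nonneg hprod.1
    _ = 1 := hprod.2

lemma HasType.re_trace_tensorPow_mul_one_sub_le (hxs : HasType xs P) (hP : IsProbDist P)
    (hW : ∀ x, IsState (W x)) (ht : 0 < t) :
    (tensorPow (fun i => W (xs i)) *
        (1 - entropyTypicalProj (isState_avgState hP hW).1.1 n t)).trace.re ≤
      n * (d * Kconst ^ 2) / t ^ 2 := by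
  have hρ := isState_avgState hP hW
  set U := hρ.1.1.eigenvectorUnitary
  set r := hρ.1.1.eigenvalues
  have hr : IsProbDist r := hρ.isProbDist_eigenvalues
  have hr_eq (k : Fin d) : r k = ∑ x, P x * bornProb U (W x) k := by
    rw [← bornProb_avgState, bornProb_eigenvectorUnitary]
  have hborn (x : X) : IsProbDist (bornProb U (W x)) := (hW x).isProbDist_bornProb
  have hpos (i : Fin n) (k : Fin d) (hk : bornProb U (W (xs i)) k ≠ 0) : 0 < r k := by
    rw [hr_eq]
    exact sum_pos' (fun x _ => mul_nonneg (hP.1 x) ((hborn x).1 k))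
      ⟨xs i, mem_univ _, mul_pos (hxs.apply_pos i) (((hborn _).1 k).lt_of_ne' hk)⟩
  have havg (φ : Fin d → ℝ) :
      ∑ i, ∑ k, bornProb U (W (xs i)) k * φ k = n * ∑ k, r k * φ k := by
    rw [hxs.sum_comp fun x => ∑ k, bornProb U (W x) k * φ k]
    simp only [hr_eq, mul_sum, sum_mul, mul_assoc]
    rw [sum_comm]
  have hmean : ∑ i, ∑ k, bornProb U (W (xs i)) k * Real.logb 2 (r k) =
      -(n * vnEntropy (avgState P W)) := by
    rw [havg, vnEntropy_eq_shannonEntropy_eigenvalues hρ.1.1, shannonEntropy, mul_neg, neg_neg]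
  have hatypical := IsProbDist.sum_prod_le_of_prod_notMem_Icc (fun i => hborn (xs i)) hpos ht
  rw [hmean, havg] at hatypical
  rw [entropyTypicalProj, one_sub_basisProj, re_trace_mul_basisProj, compl_filter]
  simp only [bornProb_tensorUnitary _ fun i => (hW (xs i)).1.1]
  calc _ ≤ _ := sum_le_sum_of_subset_of_nonneg
        (monotone_filter_right _ fun js _ hjs hmem => hjs hmem.1)
        fun js _ _ => (IsProbDist.prod fun i => hborn (xs i)).1 js
    _ ≤ _ := hatypical
    _ ≤ _ := by
        gcongr
        simpa using hr.sum_mul_logb_sq_le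

end Typicality

section Converse

lemma IsCode.card_mul_le_exp2 {X : Type*} [Fintype X] {d n : ℕ} {W : X → Mat d} {lam : ℝ}
    {M' : Type*} [Fintype M'] {M : Finset M'} {f : M' → Fin n → X} {D : M' → MatPow d n}
    {P : X → ℝ} {t : ℝ} (hcode : IsCode W lam M f D) (hW : ∀ x, IsState (W x))
    (hP : IsProbDist P) (htype : ∀ m ∈ M, HasType (f m) P) (ht : 0 < t) :
    M.card * (1 - lam - 4 * (n * (d * Kconst ^ 2) / t ^ 2)) ≤
      2 * exp2 (n * mutualInfo P W + 2 * t) := by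
  obtain ⟨hD₀, hD, hdecode⟩ := hcode
  have hρ := isState_avgState hP hW
  calc M.card * (1 - lam - 4 * (n * (d * Kconst ^ 2) / t ^ 2))
      = M.card * (1 - lam - 2 * (n * (d * Kconst ^ 2) / t ^ 2 +
          n * (d * Kconst ^ 2) / t ^ 2)) := by ring
    _ ≤ 2 * exp2 (-(n * condEntropy P W) + t) * (entropyTypicalProj hρ.1.1 n t).trace.re :=
        card_mul_le_mul_trace (isStarProjection_basisProj _) (fun m => (hD₀ m).nonneg) hD
          (exp2_pos _).le (fun m _ => tensorPow_nonneg fun i => (hW (f m i)).1.nonneg) hdecode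
          (fun m hm => (htype m hm).re_trace_tensorPow_mul_one_sub_le hP hW ht)
          fun m hm _ => (htype m hm).re_trace_tensorPow_mul_le hW ht
    _ ≤ 2 * exp2 (-(n * condEntropy P W) + t) * exp2 (n * vnEntropy (avgState P W) + t) :=
        mul_le_mul_of_nonneg_left (hρ.re_trace_entropyTypicalProj_le n t)
          (mul_pos two_pos (exp2_pos _)).le
    _ = 2 * exp2 (n * mutualInfo P W + 2 * t) := by
        rw [mul_assoc, ← exp2_add, mutualInfo]
        ring_nf

lemma div_deviation_sq_le {a d n η : ℝ} (ha : 1 ≤ a) (hd : 1 ≤ d) (hn : 0 < n) (hη : 0 < η) :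
    n * (d * Kconst ^ 2) / (Kconst * d * √a * (√(32 * a * d) / η) * √n) ^ 2 ≤ η ^ 2 / 32 := by
  have hK := Kconst_pos
  have hsq : (Kconst * d * √a * (√(32 * a * d) / η) * √n) ^ 2 =
      n * (d * Kconst ^ 2) * (32 * (a * d) ^ 2 / η ^ 2) := by
    simp only [mul_pow, div_pow]
    rw [Real.sq_sqrt (by positivity), Real.sq_sqrt (by positivity), Real.sq_sqrt hn.le]
    ring
  calc n * (d * Kconst ^ 2) / (Kconst * d * √a * (√(32 * a * d) / η) * √n) ^ 2
      = η ^ 2 / (32 * (a * d) ^ 2) := by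
        rw [hsq]
        field_simp
    _ ≤ η ^ 2 / 32 := by
        gcongr
        exact le_mul_of_one_le_right (by norm_num)
          (one_le_pow₀ (one_le_mul_of_one_le_of_one_le ha hd))

end Converse

end Development

/-- **Theorem 3, refined form (Strong converse for constant composition codes).**
Every `(n,λ)`-code all of whose codewords have the same type `P` satisfies
`|M| ≤ (4/(1−λ)) exp₂(n I(P;W) + 2Kd√a δ√n)` with `δ = √(32ad)/(1−λ)` and
`K = 2 log₂(e)/e`. -/
theorem strong_converse_constant_composition {X : Type} [Fintype X] {d : ℕ}
    (W : X → Mat d) (hW : ∀ x, IsState (W x))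
    (lam : ℝ) (hlam : lam ∈ Set.Ioo (0 : ℝ) 1)
    (n : ℕ) (hn : 0 < n) (M' : Type) [Fintype M'] (M : Finset M')
    (f : M' → Fin n → X) (D : M' → MatPow d n) (hcode : IsCode W lam M f D)
    (P : X → ℝ) (hP : IsProbDist P)
    (htype : ∀ m ∈ M, ∀ x, (countIn x (f m) : ℝ) = n * P x) :
    (M.card : ℝ) ≤ 4 / (1 - lam) *
      exp2 ((n : ℝ) * mutualInfo P W +
        2 * Kconst * d * Real.sqrt (Fintype.card X) *
          (Real.sqrt (32 * (Fintype.card X) * d) / (1 - lam)) * Real.sqrt n) := by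
  have : Nonempty X := hP.nonempty
  have : Nonempty (Fin d) := (isState_avgState hP hW).nonempty
  have ha : (1 : ℝ) ≤ Fintype.card X := Nat.one_le_cast.2 Fintype.card_pos
  have hd : (1 : ℝ) ≤ d := Nat.one_le_cast.2 (Fin.pos_iff_nonempty.2 ‹_›)
  have hη : 0 < 1 - lam := sub_pos.2 hlam.2
  have hK := Kconst_pos
  set t := Kconst * d * √(Fintype.card X) * (√(32 * Fintype.card X * d) / (1 - lam)) * √n with ht
  have ht₀ : 0 < t := by positivity
  have herror : n * (d * Kconst ^ 2) / t ^ 2 ≤ (1 - lam) ^ 2 / 32 :=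
    div_deviation_sq_le ha hd (Nat.cast_pos.2 hn) hη
  have hrate : (1 - lam) / 2 ≤ 1 - lam - 4 * (n * (d * Kconst ^ 2) / t ^ 2) := by
    nlinarith [hlam.1]
  have hcard : M.card * ((1 - lam) / 2) ≤ 2 * exp2 (n * mutualInfo P W + 2 * t) :=
    (mul_le_mul_of_nonneg_left hrate M.card.cast_nonneg).trans
      (hcode.card_mul_le_exp2 hW hP htype ht₀)
  calc (M.card : ℝ) = 2 / (1 - lam) * (M.card * ((1 - lam) / 2)) := by field_simp
    _ ≤ 2 / (1 - lam) * (2 * exp2 (n * mutualInfo P W + 2 * t)) := by gcongr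
    _ = _ := by rw [ht]; ring_nf
end
end

section
/- (Holevo bound) Let W be a classical–quantum channel from a finite alphabet X into the density operators on ℂ^d, P a probability distribution on X, and D = (D_y)_{y∈Y} a POVM on ℂ^d indexed by a finite set Y (positive semidefinite operators summing to the identity). Define the classical channel Q : X → probability distributions on Y by Q(y|x) = Tr(W_x D_y). Then the classical mutual information satisfies I(P;Q) ≤ I(P;W), where I(P;Q) = H(PQ) − Σ_x P(x)H(Q(·|x)) with Shannon entropies and (PQ)(y) = Σ_x P(x)Q(y|x), and I(P;W) = H(PW) − Σ_x P(x)H(W_x) with von Neumann entropies and PW = Σ_x P(x)W_x. -/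
open Matrix BigOperators Finset
open scoped Classical ComplexOrder

noncomputable section

/-!
The Holevo information is the `P`-average of the relative entropies `D(W_x‖PW)`, and the classical
mutual information that of `D(Q_x‖PQ)`, so it suffices that a measurement does not increase
relative entropy.

Along the segment from `p` to `q`, the function `s ↦ D(p‖(1 - s)p + sq)` vanishes at `s = 0` and has
derivative `(∑ p - ∑ h_s(p, q)) / (1 - s)`, where `h_s` is the harmonic mean with weights `s` and
`1 - s`. Hence, among pairs `(p, q)` with the same total mass of `p`, smaller harmonic means give a
larger relative entropy.
The quantum relative entropy of `A` and `B` is the classical one of their Nussbaum–Szkoła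
distributions, whose harmonic means sum to the minimum over `M` of
`Tr A(1 - M)(1 - M)ᴴ / s + Tr B Mᴴ M / (1 - s)`. For a POVM `D`, the sum for the outcome
distributions is the minimum over real `x` of
`∑ (1 - x_y)² Tr A D_y / s + ∑ x_y² Tr B D_y / (1 - s)`, and by Kadison's inequality this dominates
the quantum expression at `M = ∑ x_y D_y`.
-/

section RelativeEntropy

/-- Relative entropy `D(p‖q)` of two weight functions, in nats. As `Real.log 0 = 0`, the value is
meaningful only if `p` vanishes wherever `q` does. -/
def relEntropy {I : Type*} [Fintype I] (p q : I → ℝ) : ℝ :=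
  ∑ i, p i * (Real.log (p i) - Real.log (q i))

/-- The harmonic mean of `p` and `q` with weights `s` and `1 - s`, that is
`(s / p + (1 - s) / q)⁻¹`, cleared of inner fractions so that it is `0` where `p` or `q` is. -/
def weightedHarmonicMean (s p q : ℝ) : ℝ :=
  p * q / ((1 - s) * p + s * q)

variable {s : ℝ}

lemma weightedHarmonicMean_mul_left (w p q : ℝ) :
    weightedHarmonicMean s (w * p) (w * q) = w * weightedHarmonicMean s p q := by
  unfold weightedHarmonicMean
  rcases eq_or_ne w 0 with rfl | hw
  · simp
  · rw [show w * p * (w * q) = w * (w * (p * q)) by ring,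
      show (1 - s) * (w * p) + s * (w * q) = w * ((1 - s) * p + s * q) by ring,
      mul_div_assoc, mul_div_mul_left _ _ hw]

lemma mix_pos {p q : ℝ} (hp : 0 < p) (hq : 0 < q) (hs : s ∈ Set.Icc (0 : ℝ) 1) :
    0 < (1 - s) * p + s * q := by
  simpa only [smul_eq_mul, Set.mem_Ioi] using
    convex_Ioi (0 : ℝ) hp hq (sub_nonneg.2 hs.2) hs.1 (sub_add_cancel 1 s)

lemma norm_sq_mul_weightedHarmonicMean_le {E : Type*} [SeminormedAddCommGroup E] {p q : ℝ}
    (hp : 0 ≤ p) (hq : 0 ≤ q) (hs : s ∈ Set.Ioo (0 : ℝ) 1) (u v : E) :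
    ‖u‖ ^ 2 * weightedHarmonicMean s p q ≤ p / s * ‖u - v‖ ^ 2 + q / (1 - s) * ‖v‖ ^ 2 := by
  have hs₀ : 0 < s := hs.1
  have hs₁ : 0 < 1 - s := sub_pos.2 hs.2
  rcases hp.eq_or_lt with rfl | hp
  · simp only [weightedHarmonicMean, zero_mul, zero_div, mul_zero, zero_add]
    positivity
  have htriangle : ‖u‖ ≤ ‖u - v‖ + ‖v‖ := by simpa using norm_add_le (u - v) v
  have hmean : 0 ≤ weightedHarmonicMean s p q := by
    unfold weightedHarmonicMean
    positivity
  have hsquare : p / s * ‖u - v‖ ^ 2 + q / (1 - s) * ‖v‖ ^ 2 -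
      (‖u - v‖ + ‖v‖) ^ 2 * weightedHarmonicMean s p q =
        ((1 - s) * p * ‖u - v‖ - s * q * ‖v‖) ^ 2 / (s * (1 - s) * ((1 - s) * p + s * q)) := by
    rw [weightedHarmonicMean]
    field_simp
    ring
  calc ‖u‖ ^ 2 * weightedHarmonicMean s p q
      ≤ (‖u - v‖ + ‖v‖) ^ 2 * weightedHarmonicMean s p q := by gcongr
    _ ≤ p / s * ‖u - v‖ ^ 2 + q / (1 - s) * ‖v‖ ^ 2 := by
      rw [← sub_nonneg, hsquare]
      positivity

lemma exists_weightedHarmonicMean_eq {p q : ℝ} (hp : 0 ≤ p) (hq : 0 ≤ q)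
    (hs : s ∈ Set.Ioo (0 : ℝ) 1) :
    ∃ x : ℝ, p / s * (1 - x) ^ 2 + q / (1 - s) * x ^ 2 = weightedHarmonicMean s p q := by
  have hs₀ : 0 < s := hs.1
  have hs₁ : 0 < 1 - s := sub_pos.2 hs.2
  rcases hp.eq_or_lt with rfl | hp
  · exact ⟨0, by simp [weightedHarmonicMean]⟩
  · refine ⟨(1 - s) * p / ((1 - s) * p + s * q), ?_⟩
    rw [weightedHarmonicMean]
    field_simp
    ring

variable {I J : Type*} [Fintype I] [Fintype J]

lemma relEntropy_self (p : I → ℝ) : relEntropy p p = 0 := by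
  simp [relEntropy]

lemma hasDerivAt_mul_log_sub_log_mix {p q : ℝ} (hp : 0 ≤ p) (hq : 0 ≤ q) (hpq : q = 0 → p = 0)
    (hs : s ∈ Set.Icc (0 : ℝ) 1) :
    HasDerivAt (fun s ↦ p * (Real.log p - Real.log ((1 - s) * p + s * q)))
      (p * (p - q) / ((1 - s) * p + s * q)) s := by
  rcases hp.eq_or_lt with rfl | hp
  · simpa using hasDerivAt_const s (0 : ℝ)
  · have hmix := mix_pos hp (hq.lt_of_ne' fun h ↦ hp.ne' (hpq h)) hs
    have hlin : HasDerivAt (fun s ↦ (1 - s) * p + s * q) (q - p) s :=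
      (((hasDerivAt_id s).const_sub 1).mul_const p).fun_add
        ((hasDerivAt_id s).mul_const q) |>.congr_deriv (by ring)
    exact (((hlin.log hmix.ne').const_sub (Real.log p)).const_mul p).congr_deriv (by ring)

lemma hasDerivAt_relEntropy_mix {p q : I → ℝ} (hp : 0 ≤ p) (hq : 0 ≤ q)
    (hpq : ∀ i, q i = 0 → p i = 0) (hs : s ∈ Set.Icc (0 : ℝ) 1) :
    HasDerivAt (fun s : ℝ ↦ relEntropy p ((1 - s) • p + s • q))
      (∑ i, p i * (p i - q i) / ((1 - s) * p i + s * q i)) s :=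
  HasDerivAt.fun_sum fun i _ ↦ hasDerivAt_mul_log_sub_log_mix (hp i) (hq i) (hpq i) hs

lemma mul_sub_div_mix {p q : ℝ} (hp : 0 ≤ p) (hq : 0 ≤ q)
    (hs : s ∈ Set.Ioo (0 : ℝ) 1) :
    p * (p - q) / ((1 - s) * p + s * q) = (p - weightedHarmonicMean s p q) / (1 - s) := by
  have hs₀ : 0 < s := hs.1
  have hs₁ : 0 < 1 - s := sub_pos.2 hs.2
  rcases hp.eq_or_lt with rfl | hp
  · simp [weightedHarmonicMean]
  · rw [weightedHarmonicMean]
    field_simp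
    ring

theorem relEntropy_le_relEntropy_of_weightedHarmonicMean_le {p q : I → ℝ} {a b : J → ℝ}
    (hp : 0 ≤ p) (hq : 0 ≤ q) (hpq : ∀ i, q i = 0 → p i = 0)
    (ha : 0 ≤ a) (hb : 0 ≤ b) (hab : ∀ j, b j = 0 → a j = 0) (hsum : ∑ i, p i = ∑ j, a j)
    (hmean : ∀ s ∈ Set.Ioo (0 : ℝ) 1,
      ∑ i, weightedHarmonicMean s (p i) (q i) ≤ ∑ j, weightedHarmonicMean s (a j) (b j)) :
    relEntropy a b ≤ relEntropy p q := by
  have hderiv := fun (s : ℝ) (hs : s ∈ Set.Icc (0 : ℝ) 1) ↦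
    (hasDerivAt_relEntropy_mix hp hq hpq hs).sub (hasDerivAt_relEntropy_mix ha hb hab hs)
  have hmono := monotoneOn_of_hasDerivWithinAt_nonneg (convex_Icc 0 1)
    (fun s hs ↦ (hderiv s hs).continuousAt.continuousWithinAt)
    (fun s hs ↦ (hderiv s (interior_subset hs)).hasDerivWithinAt) fun s hs ↦ by
      rw [interior_Icc] at hs
      simp only [mul_sub_div_mix (hp _) (hq _) hs, mul_sub_div_mix (ha _) (hb _) hs,
        ← Finset.sum_div, Finset.sum_sub_distrib, hsum]
      rw [← sub_div, sub_sub_sub_cancel_left]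
      exact div_nonneg (sub_nonneg.2 (hmean s hs)) (sub_nonneg.2 hs.2.le)
  simpa [relEntropy_self] using
    hmono (Set.left_mem_Icc.2 zero_le_one) (Set.right_mem_Icc.2 zero_le_one) zero_le_one

end RelativeEntropy

section Spectral

variable {𝕜 n : Type*} [RCLike 𝕜] [Fintype n] [DecidableEq n] {A B : Matrix n n 𝕜}

lemma cfc_eq_eigenvectorUnitary_mul_diagonal_mul (hA : A.IsHermitian) (f : ℝ → ℝ) :
    cfc f A = (hA.eigenvectorUnitary : Matrix n n 𝕜) *
      diagonal (fun i ↦ (f (hA.eigenvalues i) : 𝕜)) *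
        star (hA.eigenvectorUnitary : Matrix n n 𝕜) :=
  hA.cfc_eq f

lemma trace_cfc (hA : A.IsHermitian) (f : ℝ → ℝ) :
    (cfc f A).trace = ∑ i, (f (hA.eigenvalues i) : 𝕜) := by
  rw [cfc_eq_eigenvectorUnitary_mul_diagonal_mul hA, trace_mul_cycle, Unitary.coe_star_mul_self,
    Matrix.one_mul, trace_diagonal]

lemma mul_cfc_self (hA : A.IsHermitian) (f : ℝ → ℝ) : A * cfc f A = cfc (fun x ↦ x * f x) A := by
  rw [cfc_mul _ f A (continuousOn_id' _) (A.finite_real_spectrum.continuousOn f),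
    cfc_id' ℝ A hA.isSelfAdjoint]

open scoped MatrixOrder in
lemma posSemidef_cfc {f : ℝ → ℝ} (hf : ∀ x, 0 ≤ f x) (A : Matrix n n 𝕜) : (cfc f A).PosSemidef :=
  Matrix.nonneg_iff_posSemidef.1 (cfc_nonneg fun x _ ↦ hf x)

lemma trace_diagonal_mul_mul_diagonal_mul_conjTranspose (a b : n → ℝ) (N : Matrix n n 𝕜) :
    (diagonal (fun i ↦ (a i : 𝕜)) * N * diagonal (fun j ↦ (b j : 𝕜)) * Nᴴ).trace =
      ∑ ij : n × n, ((a ij.1 * b ij.2 * ‖N ij.1 ij.2‖ ^ 2 : ℝ) : 𝕜) := by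
  rw [trace, Fintype.sum_prod_type]
  refine Finset.sum_congr rfl fun i _ ↦ ?_
  rw [diag_apply, Matrix.mul_apply]
  refine Finset.sum_congr rfl fun j _ ↦ ?_
  rw [mul_diagonal, diagonal_mul, conjTranspose_apply, RCLike.star_def, mul_right_comm _ (N i j),
    mul_assoc, RCLike.mul_conj]
  push_cast
  rfl

/-- The matrix of `M` between an eigenbasis of `A` and an eigenbasis of `B`: its entries are
`⟨uᵢ, M vⱼ⟩`. -/
def eigenbasisMatrix (hA : A.IsHermitian) (hB : B.IsHermitian) (M : Matrix n n 𝕜) :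
    Matrix n n 𝕜 :=
  star (hA.eigenvectorUnitary : Matrix n n 𝕜) * M * (hB.eigenvectorUnitary : Matrix n n 𝕜)

lemma re_trace_cfc_mul_mul_cfc_mul_conjTranspose (hA : A.IsHermitian) (hB : B.IsHermitian)
    (f g : ℝ → ℝ) (M : Matrix n n 𝕜) :
    RCLike.re (cfc f A * M * cfc g B * Mᴴ).trace =
      ∑ ij : n × n, f (hA.eigenvalues ij.1) * g (hB.eigenvalues ij.2) *
        ‖eigenbasisMatrix hA hB M ij.1 ij.2‖ ^ 2 := by
  have htrace : (cfc f A * M * cfc g B * Mᴴ).trace =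
      (diagonal (fun i ↦ (f (hA.eigenvalues i) : 𝕜)) * eigenbasisMatrix hA hB M *
        diagonal (fun j ↦ (g (hB.eigenvalues j) : 𝕜)) * (eigenbasisMatrix hA hB M)ᴴ).trace := by
    simp only [cfc_eq_eigenvectorUnitary_mul_diagonal_mul hA,
      cfc_eq_eigenvectorUnitary_mul_diagonal_mul hB, eigenbasisMatrix, star_eq_conjTranspose,
      conjTranspose_mul, conjTranspose_conjTranspose, Matrix.mul_assoc]
    rw [trace_mul_comm]
    simp only [Matrix.mul_assoc]
  rw [htrace, trace_diagonal_mul_mul_diagonal_mul_conjTranspose, map_sum]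
  simp only [RCLike.ofReal_re]

lemma re_trace_mul_mul_self_left (hA : A.IsHermitian) (hB : B.IsHermitian) {M : Matrix n n 𝕜}
    (hM : M.IsHermitian) :
    RCLike.re (A * (M * M)).trace =
      ∑ ij : n × n, hA.eigenvalues ij.1 * ‖eigenbasisMatrix hA hB M ij.1 ij.2‖ ^ 2 := by
  have := re_trace_cfc_mul_mul_cfc_mul_conjTranspose hA hB id 1 M
  simpa [cfc_id ℝ A hA.isSelfAdjoint, cfc_one ℝ B hB.isSelfAdjoint, hM.eq, Matrix.mul_assoc]
    using this

lemma re_trace_mul_mul_self_right (hA : A.IsHermitian) (hB : B.IsHermitian) {M : Matrix n n 𝕜}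
    (hM : M.IsHermitian) :
    RCLike.re (B * (M * M)).trace =
      ∑ ij : n × n, hB.eigenvalues ij.2 * ‖eigenbasisMatrix hA hB M ij.1 ij.2‖ ^ 2 := by
  have := re_trace_cfc_mul_mul_cfc_mul_conjTranspose hA hB 1 id M
  simpa [cfc_id ℝ B hB.isSelfAdjoint, cfc_one ℝ A hA.isSelfAdjoint, hM.eq, Matrix.mul_assoc,
    trace_mul_comm M] using this

/-- The squared overlaps `|⟨uᵢ, vⱼ⟩|²` of the eigenvectors of `A` and `B`. -/
def eigenOverlap (hA : A.IsHermitian) (hB : B.IsHermitian) (ij : n × n) : ℝ :=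
  ‖eigenbasisMatrix hA hB 1 ij.1 ij.2‖ ^ 2

lemma eigenOverlap_nonneg (hA : A.IsHermitian) (hB : B.IsHermitian) (ij : n × n) :
    0 ≤ eigenOverlap hA hB ij :=
  sq_nonneg _

lemma re_trace_cfc_mul_cfc (hA : A.IsHermitian) (hB : B.IsHermitian) (f g : ℝ → ℝ) :
    RCLike.re (cfc f A * cfc g B).trace =
      ∑ ij, eigenOverlap hA hB ij * (f (hA.eigenvalues ij.1) * g (hB.eigenvalues ij.2)) := by
  simpa [eigenOverlap, mul_comm] using re_trace_cfc_mul_mul_cfc_mul_conjTranspose hA hB f g 1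

lemma re_trace_mul_cfc (hA : A.IsHermitian) (hB : B.IsHermitian) (g : ℝ → ℝ) :
    RCLike.re (A * cfc g B).trace =
      ∑ ij, eigenOverlap hA hB ij * (hA.eigenvalues ij.1 * g (hB.eigenvalues ij.2)) := by
  simpa only [cfc_id ℝ A hA.isSelfAdjoint, id_eq] using re_trace_cfc_mul_cfc hA hB id g

end Spectral

section Weights

variable {𝕜 n Y : Type*} [RCLike 𝕜]

lemma isHermitian_sum_smul [Fintype Y] {D : Y → Matrix n n 𝕜}
    (hD : ∀ y, (D y).IsHermitian) (x : Y → ℝ) :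
    (∑ y, x y • D y).IsHermitian := by
  simp only [IsHermitian, conjTranspose_sum, conjTranspose_smul, (hD _).eq, star_trivial]

variable [Fintype n] {A B : Matrix n n 𝕜} {D : Y → Matrix n n 𝕜}

lemma re_trace_mul_nonneg_s19 (hA : A.PosSemidef) (hB : B.PosSemidef) :
    0 ≤ RCLike.re (A * B).trace := by
  rw [← cfc_id ℝ B hB.1.isSelfAdjoint, re_trace_mul_cfc hA.1 hB.1]
  exact Finset.sum_nonneg fun ij _ ↦ mul_nonneg (eigenOverlap_nonneg ..)
    (mul_nonneg (hA.eigenvalues_nonneg _) (hB.eigenvalues_nonneg _))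

/-- Operator form of `p ≪ q`: every event that is null for `B` is null for `A`. For positive
semidefinite `A` and `B` this is `ker B ⊆ ker A`. -/
def AbsContinuous (A B : Matrix n n 𝕜) : Prop :=
  ∀ M : Matrix n n 𝕜, M.PosSemidef → RCLike.re (B * M).trace = 0 → RCLike.re (A * M).trace = 0

/-- Outcome weights `Tr (A D_y)` of the measurement `D` in the state `A` (Born's rule). -/
def bornWeights (D : Y → Matrix n n 𝕜) (A : Matrix n n 𝕜) (y : Y) : ℝ :=
  RCLike.re (A * D y).trace

lemma bornWeights_nonneg (hD : ∀ y, (D y).PosSemidef) (hA : A.PosSemidef) :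
    0 ≤ bornWeights D A :=
  fun y ↦ re_trace_mul_nonneg_s19 hA (hD y)

variable {X : Type*} [Fintype X]

lemma bornWeights_sum_smul (D : Y → Matrix n n 𝕜) (P : X → ℝ) (W : X → Matrix n n 𝕜) :
    bornWeights D (∑ x, P x • W x) = ∑ x, P x • bornWeights D (W x) := by
  ext y
  simp [bornWeights, Finset.sum_mul, trace_sum, RCLike.smul_re]

lemma absContinuous_sum_smul {P : X → ℝ} (hP : ∀ x, 0 ≤ P x) {W : X → Matrix n n 𝕜}
    (hW : ∀ x, (W x).PosSemidef) {x : X} (hx : P x ≠ 0) :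
    AbsContinuous (W x) (∑ x, P x • W x) := by
  intro M hM hzero
  simp only [Finset.sum_mul, Matrix.smul_mul, trace_sum, trace_smul, map_sum, RCLike.smul_re]
    at hzero
  rw [Finset.sum_eq_zero_iff_of_nonneg fun x _ ↦
    mul_nonneg (hP x) (re_trace_mul_nonneg_s19 (hW x) hM)] at hzero
  exact (mul_eq_zero.1 (hzero x (Finset.mem_univ x))).resolve_left hx

end Weights

section Measurement

variable {𝕜 n Y : Type*} [RCLike 𝕜] [Fintype n] [DecidableEq n] [Fintype Y]
  {A B : Matrix n n 𝕜} {D : Y → Matrix n n 𝕜}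

/-- Umegaki's relative entropy `Tr A (log A - log B)`, in nats. As `Real.log 0 = 0`, the value is
meaningful only if `AbsContinuous A B`. -/
def umegakiRelEntropy (A B : Matrix n n 𝕜) : ℝ :=
  RCLike.re (A * (cfc Real.log A - cfc Real.log B)).trace

/-- The first Nussbaum–Szkoła distribution `λᵢ |⟨uᵢ, vⱼ⟩|²` of `A` and `B`, `λᵢ` being the
eigenvalues of `A`. -/
def nussbaumSzkolaFst (hA : A.IsHermitian) (hB : B.IsHermitian) (ij : n × n) : ℝ :=
  eigenOverlap hA hB ij * hA.eigenvalues ij.1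

/-- The second Nussbaum–Szkoła distribution `μⱼ |⟨uᵢ, vⱼ⟩|²` of `A` and `B`, `μⱼ` being the
eigenvalues of `B`. -/
def nussbaumSzkolaSnd (hA : A.IsHermitian) (hB : B.IsHermitian) (ij : n × n) : ℝ :=
  eigenOverlap hA hB ij * hB.eigenvalues ij.2

lemma nussbaumSzkolaFst_nonneg (hA : A.PosSemidef) (hB : B.IsHermitian) :
    0 ≤ nussbaumSzkolaFst hA.1 hB :=
  fun _ ↦ mul_nonneg (eigenOverlap_nonneg ..) (hA.eigenvalues_nonneg _)

lemma nussbaumSzkolaSnd_nonneg (hA : A.IsHermitian) (hB : B.PosSemidef) :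
    0 ≤ nussbaumSzkolaSnd hA hB.1 :=
  fun _ ↦ mul_nonneg (eigenOverlap_nonneg ..) (hB.eigenvalues_nonneg _)

lemma sum_nussbaumSzkolaFst (hA : A.IsHermitian) (hB : B.IsHermitian) :
    ∑ ij, nussbaumSzkolaFst hA hB ij = RCLike.re A.trace := by
  have := re_trace_mul_cfc hA hB 1
  simpa [cfc_one ℝ B hB.isSelfAdjoint, nussbaumSzkolaFst] using this.symm

lemma AbsContinuous.nussbaumSzkolaFst_eq_zero_of_eigenvalue (hAB : AbsContinuous A B)
    (hA : A.PosSemidef) (hB : B.IsHermitian) {ij : n × n} (hij : hB.eigenvalues ij.2 = 0) :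
    nussbaumSzkolaFst hA.1 hB ij = 0 := by
  set kerIndicator : ℝ → ℝ := fun x ↦ if x = 0 then 1 else 0
  have hker (x : ℝ) : 0 ≤ kerIndicator x := by
    simp only [kerIndicator]
    positivity
  have hid_mul (x : ℝ) : x * kerIndicator x = 0 := by simp [kerIndicator]
  have hB₀ : RCLike.re (B * cfc kerIndicator B).trace = 0 := by
    simp [mul_cfc_self hB, hid_mul]
  have hA₀ := hAB _ (posSemidef_cfc hker B) hB₀
  rw [re_trace_mul_cfc hA.1 hB, Finset.sum_eq_zero_iff_of_nonneg fun ij _ ↦ mul_nonneg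
    (eigenOverlap_nonneg ..) (mul_nonneg (hA.eigenvalues_nonneg _) (hker _))] at hA₀
  simpa [hij, kerIndicator, nussbaumSzkolaFst] using hA₀ ij (Finset.mem_univ _)

lemma AbsContinuous.nussbaumSzkolaFst_eq_zero_of_snd (hAB : AbsContinuous A B)
    (hA : A.PosSemidef) (hB : B.IsHermitian) (ij : n × n) (hij : nussbaumSzkolaSnd hA.1 hB ij = 0) :
    nussbaumSzkolaFst hA.1 hB ij = 0 := by
  rcases mul_eq_zero.1 hij with h | h
  · rw [nussbaumSzkolaFst, h, zero_mul]
  · exact hAB.nussbaumSzkolaFst_eq_zero_of_eigenvalue hA hB h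

theorem umegakiRelEntropy_eq_relEntropy_nussbaumSzkola (hAB : AbsContinuous A B)
    (hA : A.PosSemidef) (hB : B.IsHermitian) :
    umegakiRelEntropy A B =
      relEntropy (nussbaumSzkolaFst hA.1 hB) (nussbaumSzkolaSnd hA.1 hB) := by
  have hAlog : RCLike.re (A * cfc Real.log A).trace =
      ∑ ij, nussbaumSzkolaFst hA.1 hB ij * Real.log (hA.1.eigenvalues ij.1) := by
    have := re_trace_cfc_mul_cfc hA.1 hB (fun x ↦ x * Real.log x) 1
    simpa [cfc_one ℝ B hB.isSelfAdjoint, mul_cfc_self hA.1, nussbaumSzkolaFst, mul_assoc] using this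
  rw [umegakiRelEntropy, mul_sub, trace_sub, map_sub, hAlog, re_trace_mul_cfc hA.1 hB,
    ← Finset.sum_sub_distrib]
  refine Finset.sum_congr rfl fun ij _ ↦ ?_
  rw [← mul_assoc, ← nussbaumSzkolaFst, ← mul_sub]
  rcases eq_or_ne (nussbaumSzkolaFst hA.1 hB ij) 0 with h | h
  · rw [h, zero_mul, zero_mul]
  · have hw := left_ne_zero_of_mul h
    have hμ : hB.eigenvalues ij.2 ≠ 0 := mt (hAB.nussbaumSzkolaFst_eq_zero_of_eigenvalue hA hB) h
    rw [nussbaumSzkolaSnd, Real.log_mul hw hμ]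
    nth_rw 3 [nussbaumSzkolaFst]
    rw [Real.log_mul hw (right_ne_zero_of_mul h), add_sub_add_left_eq_sub]

lemma sum_bornWeights (hDsum : ∑ y, D y = 1) (A : Matrix n n 𝕜) :
    ∑ y, bornWeights D A y = RCLike.re A.trace := by
  simp only [bornWeights]
  rw [← map_sum, ← trace_sum, ← Finset.mul_sum, hDsum, Matrix.mul_one]

/-- Kadison's inequality for the unital positive map `x ↦ ∑ y, x y • D y`. -/
theorem posSemidef_sum_sq_smul_sub_mul_self (hD : ∀ y, (D y).PosSemidef) (hDsum : ∑ y, D y = 1)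
    (x : Y → ℝ) :
    (∑ y, x y ^ 2 • D y - (∑ y, x y • D y) * (∑ y, x y • D y)).PosSemidef := by
  set Z := ∑ y, x y • D y with hZ
  have hZherm : Zᴴ = Z := isHermitian_sum_smul (fun y ↦ (hD y).1) x
  have hexpand (y : Y) : (x y • 1 - Z) * D y * (x y • 1 - Z)ᴴ =
      x y ^ 2 • D y - (x y • D y) * Z - Z * (x y • D y) + Z * D y * Z := by
    rw [conjTranspose_sub, hZherm, conjTranspose_smul, conjTranspose_one, star_trivial]
    simp only [sub_mul, mul_sub, Matrix.smul_mul, Matrix.mul_smul, Matrix.one_mul, Matrix.mul_one,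
      smul_smul, pow_two]
    abel
  have hvariance : ∑ y, (x y • 1 - Z) * D y * (x y • 1 - Z)ᴴ = ∑ y, x y ^ 2 • D y - Z * Z := by
    simp only [hexpand, Finset.sum_add_distrib, Finset.sum_sub_distrib, ← Finset.sum_mul,
      ← Finset.mul_sum, hDsum, ← hZ, Matrix.mul_one]
    abel
  exact hvariance ▸ posSemidef_sum _ fun y _ ↦ (hD y).mul_mul_conjTranspose_same _

lemma re_trace_mul_sum_smul_mul_self_le (hD : ∀ y, (D y).PosSemidef) (hDsum : ∑ y, D y = 1)
    (hA : A.PosSemidef) (x : Y → ℝ) :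
    RCLike.re (A * ((∑ y, x y • D y) * (∑ y, x y • D y))).trace ≤
      ∑ y, x y ^ 2 * bornWeights D A y := by
  have := re_trace_mul_nonneg_s19 hA (posSemidef_sum_sq_smul_sub_mul_self hD hDsum x)
  rw [mul_sub, trace_sub, map_sub, sub_nonneg] at this
  simpa [Finset.mul_sum, trace_sum, RCLike.smul_re, bornWeights] using this

lemma sum_weightedHarmonicMean_nussbaumSzkola_le_re_trace {s : ℝ} (hs : s ∈ Set.Ioo (0 : ℝ) 1)
    (hA : A.PosSemidef) (hB : B.PosSemidef) {M : Matrix n n 𝕜} (hM : M.IsHermitian) :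
    ∑ ij, weightedHarmonicMean s (nussbaumSzkolaFst hA.1 hB.1 ij)
        (nussbaumSzkolaSnd hA.1 hB.1 ij) ≤
      RCLike.re (A * ((1 - M) * (1 - M))).trace / s +
        RCLike.re (B * (M * M)).trace / (1 - s) := by
  rw [re_trace_mul_mul_self_left hA.1 hB.1 (isHermitian_one.sub hM),
    re_trace_mul_mul_self_right hA.1 hB.1 hM, Finset.sum_div, Finset.sum_div,
    ← Finset.sum_add_distrib]
  refine Finset.sum_le_sum fun ij _ ↦ ?_
  have hsub : eigenbasisMatrix hA.1 hB.1 (1 - M) =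
      eigenbasisMatrix hA.1 hB.1 1 - eigenbasisMatrix hA.1 hB.1 M := by
    simp only [eigenbasisMatrix, mul_sub, sub_mul]
  rw [nussbaumSzkolaFst, nussbaumSzkolaSnd, weightedHarmonicMean_mul_left, hsub, Matrix.sub_apply,
    mul_div_right_comm, mul_div_right_comm]
  exact norm_sq_mul_weightedHarmonicMean_le (hA.eigenvalues_nonneg _) (hB.eigenvalues_nonneg _)
    hs _ _

theorem sum_weightedHarmonicMean_nussbaumSzkola_le_bornWeights {s : ℝ}
    (hs : s ∈ Set.Ioo (0 : ℝ) 1) (hD : ∀ y, (D y).PosSemidef) (hDsum : ∑ y, D y = 1)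
    (hA : A.PosSemidef) (hB : B.PosSemidef) :
    ∑ ij, weightedHarmonicMean s (nussbaumSzkolaFst hA.1 hB.1 ij)
        (nussbaumSzkolaSnd hA.1 hB.1 ij) ≤
      ∑ y, weightedHarmonicMean s (bornWeights D A y) (bornWeights D B y) := by
  choose x hx using fun y ↦ exists_weightedHarmonicMean_eq (bornWeights_nonneg hD hA y)
    (bornWeights_nonneg hD hB y) hs
  set Z := ∑ y, x y • D y with hZ
  have hone_sub : 1 - Z = ∑ y, (1 - x y) • D y := by
    simp only [sub_smul, one_smul, Finset.sum_sub_distrib, hDsum, hZ]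
  calc _ ≤ RCLike.re (A * ((1 - Z) * (1 - Z))).trace / s +
        RCLike.re (B * (Z * Z)).trace / (1 - s) :=
      sum_weightedHarmonicMean_nussbaumSzkola_le_re_trace hs hA hB
        (isHermitian_sum_smul (fun y ↦ (hD y).1) x)
    _ ≤ (∑ y, (1 - x y) ^ 2 * bornWeights D A y) / s +
        (∑ y, x y ^ 2 * bornWeights D B y) / (1 - s) := by
      rw [hone_sub]
      exact add_le_add
        (div_le_div_of_nonneg_right (re_trace_mul_sum_smul_mul_self_le hD hDsum hA _) hs.1.le)
        (div_le_div_of_nonneg_right (re_trace_mul_sum_smul_mul_self_le hD hDsum hB _)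
          (sub_nonneg.2 hs.2.le))
    _ = _ := by
      rw [Finset.sum_div, Finset.sum_div, ← Finset.sum_add_distrib]
      refine Finset.sum_congr rfl fun y _ ↦ ?_
      rw [← hx]
      ring

theorem relEntropy_bornWeights_le_umegakiRelEntropy (hD : ∀ y, (D y).PosSemidef)
    (hDsum : ∑ y, D y = 1) (hA : A.PosSemidef) (hB : B.PosSemidef) (hAB : AbsContinuous A B) :
    relEntropy (bornWeights D A) (bornWeights D B) ≤ umegakiRelEntropy A B := by
  rw [umegakiRelEntropy_eq_relEntropy_nussbaumSzkola hAB hA hB.1]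
  refine relEntropy_le_relEntropy_of_weightedHarmonicMean_le
    (nussbaumSzkolaFst_nonneg hA hB.1) (nussbaumSzkolaSnd_nonneg hA.1 hB)
    (hAB.nussbaumSzkolaFst_eq_zero_of_snd hA hB.1) (bornWeights_nonneg hD hA)
    (bornWeights_nonneg hD hB) (fun y ↦ hAB (D y) (hD y)) ?_
    fun s hs ↦ sum_weightedHarmonicMean_nussbaumSzkola_le_bornWeights hs hD hDsum hA hB
  rw [sum_nussbaumSzkolaFst, sum_bornWeights hDsum]

end Measurement

lemma shannonEntropy_mul_log_two {I : Type*} [Fintype I] (p : I → ℝ) :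
    shannonEntropy p * Real.log 2 = -∑ i, p i * Real.log (p i) := by
  have hlog : Real.log 2 ≠ 0 := (Real.log_pos one_lt_two).ne'
  simp only [shannonEntropy, neg_mul, Finset.sum_mul, mul_assoc, Real.logb, div_mul_cancel₀ _ hlog]

lemma vnEntropy_mul_log_two {d : ℕ} {A : Mat d} (hA : A.IsHermitian) :
    vnEntropy A * Real.log 2 = -RCLike.re (A * cfc Real.log A).trace := by
  rw [vnEntropy, dif_pos hA, ← shannonEntropy, shannonEntropy_mul_log_two, mul_cfc_self hA,
    trace_cfc hA, map_sum]
  simp only [RCLike.ofReal_re]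

section Mixture

variable {X Y : Type*} [Fintype X] [Fintype Y]

lemma sum_mul_relEntropy_mixture (P : X → ℝ) (Q : X → Y → ℝ) :
    ∑ x, P x * relEntropy (Q x) (∑ x, P x • Q x) =
      (shannonEntropy (∑ x, P x • Q x) - ∑ x, P x * shannonEntropy (Q x)) * Real.log 2 := by
  have hcross : ∑ x, P x * ∑ y, Q x y * Real.log ((∑ x, P x • Q x) y) =
      ∑ y, (∑ x, P x • Q x) y * Real.log ((∑ x, P x • Q x) y) := by
    simp only [Finset.mul_sum, Finset.sum_apply, Finset.sum_mul, Pi.smul_apply, smul_eq_mul,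
      mul_assoc]
    exact Finset.sum_comm
  simp only [relEntropy, mul_sub, Finset.sum_sub_distrib, hcross, sub_mul, Finset.sum_mul,
    mul_assoc, shannonEntropy_mul_log_two, mul_neg, Finset.sum_neg_distrib]
  ring

lemma sum_mul_umegakiRelEntropy_avgState {d : ℕ} (P : X → ℝ) {W : X → Mat d}
    (hW : ∀ x, (W x).IsHermitian) :
    ∑ x, P x * umegakiRelEntropy (W x) (∑ x, P x • W x) = mutualInfo P W * Real.log 2 := by
  have havg : avgState P W = ∑ x, P x • W x := by simp only [avgState, Complex.coe_smul]
  have hcross : ∑ x, P x * RCLike.re (W x * cfc Real.log (avgState P W)).trace =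
      RCLike.re (avgState P W * cfc Real.log (avgState P W)).trace := by
    conv_rhs => rw [havg]
    simp only [Finset.sum_mul, Matrix.smul_mul, trace_sum, trace_smul, map_sum, RCLike.smul_re,
      havg]
  have hentropy : RCLike.re (avgState P W * cfc Real.log (avgState P W)).trace =
      -(vnEntropy (avgState P W) * Real.log 2) := by
    rw [vnEntropy_mul_log_two (havg ▸ isHermitian_sum_smul hW P), neg_neg]
  have hentropies (x : X) : RCLike.re (W x * cfc Real.log (W x)).trace =
      -(vnEntropy (W x) * Real.log 2) := by
    rw [vnEntropy_mul_log_two (hW x), neg_neg]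
  simp only [← havg, umegakiRelEntropy, mul_sub, trace_sub, map_sub, Finset.sum_sub_distrib,
    hcross, hentropy, hentropies, mutualInfo, condEntropy, sub_mul, Finset.sum_mul, mul_assoc,
    mul_neg, Finset.sum_neg_distrib]
  ring

end Mixture

theorem holevo_bound_general {X Y : Type*} [Fintype X] [Fintype Y] {d : ℕ} {W : X → Mat d}
    (hW : ∀ x, (W x).PosSemidef) {P : X → ℝ} (hP : ∀ x, 0 ≤ P x) {D : Y → Mat d}
    (hD : ∀ y, (D y).PosSemidef) (hDsum : ∑ y, D y = 1) :
    shannonEntropy (fun y => ∑ x, P x * (Matrix.trace (W x * D y)).re) -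
        ∑ x, P x * shannonEntropy (fun y => (Matrix.trace (W x * D y)).re)
      ≤ mutualInfo P W := by
  have hPQ : (fun y ↦ ∑ x, P x * (W x * D y).trace.re) = ∑ x, P x • bornWeights D (W x) := by
    ext y
    simp only [Finset.sum_apply, Pi.smul_apply, smul_eq_mul, bornWeights, RCLike.re_eq_complex_re]
  refine le_of_mul_le_mul_right ?_ (Real.log_pos one_lt_two)
  calc _ = ∑ x, P x * relEntropy (bornWeights D (W x)) (bornWeights D (∑ x, P x • W x)) := by
        rw [hPQ, bornWeights_sum_smul, sum_mul_relEntropy_mixture]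
        rfl
    _ ≤ ∑ x, P x * umegakiRelEntropy (W x) (∑ x, P x • W x) := by
        refine Finset.sum_le_sum fun x _ ↦ ?_
        rcases eq_or_ne (P x) 0 with hx | hx
        · simp only [hx, zero_mul, le_refl]
        · exact mul_le_mul_of_nonneg_left (relEntropy_bornWeights_le_umegakiRelEntropy hD hDsum
            (hW x) (posSemidef_sum _ fun x _ ↦ (hW x).smul (hP x))
            (absContinuous_sum_smul hP hW hx)) (hP x)
    _ = _ := sum_mul_umegakiRelEntropy_avgState P fun x ↦ (hW x).1

/-- **Holevo bound.** For a cq-channel `W`, input distribution `P` and POVM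
`D = (D_y)_{y∈Y}`, the classical channel `Q(y|x) = Tr(W_x D_y)` satisfies
`I(P;Q) ≤ I(P;W)`. -/
theorem holevo_bound {X : Type} [Fintype X] {d : ℕ} (W : X → Mat d)
    (hW : ∀ x, IsState (W x)) (P : X → ℝ) (hP : IsProbDist P)
    (Y : Type) [Fintype Y] (D : Y → Mat d) (hD : ∀ y, (D y).PosSemidef)
    (hDsum : ∑ y, D y = 1) :
    shannonEntropy (fun y => ∑ x, P x * (Matrix.trace (W x * D y)).re) -
        ∑ x, P x * shannonEntropy (fun y => (Matrix.trace (W x * D y)).re)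
      ≤ mutualInfo P W :=
  holevo_bound_general (fun x ↦ (hW x).1) hP.1 hD hDsum
end
end
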